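/- arXiv:1702.04623 — 9 statements merged into one kernel-verified Lean document; each statement's English description precedes it below -/
import Mathlib

section
/- Let G be a finite simple graph with at least one edge and no isolated vertices. Then G is connected if and only if the line simplicial complex Δ_L(G) is connected. -/
/-!
Two facts tie the graph to its line simplicial complex. Since each line index is spanned by a path
of `G`, any two vertices of a face are reachable from one another (`reachable_of_mem_face`); and
since every edge is contained in a line index, the two ends of an edge lie in a common facet
(`exists_facet_of_adj`).

If `G` is connected, a walk joining a vertex of one facet to a vertex of another yields a chain of
facets, one for each edge, in which consecutive facets share a vertex of the walk. Conversely, along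
a chain of facets with nonempty consecutive intersections reachability propagates from each facet to
the next, and every vertex lies in some facet because it is not isolated.
-/

open Finset

/-- The simplicial complex generated by a set `S` of finsets:
its faces are the subsets of members of `S`. -/
def complexOf {V : Type*} (S : Set (Finset V)) : Set (Finset V) :=
  {F | ∃ A ∈ S, F ⊆ A}

/-- The set of line indices of a graph `G`: triples `{i,j,k}` coming from two
distinct incident edges `{i,j}`, `{j,k}` of `G`, together with pairs `{i,j}`
for edges of `G` sharing no vertex with any other edge. -/
def lineIndices {V : Type*} [DecidableEq V] (G : SimpleGraph V) : Set (Finset V) :=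
  {F | (∃ i j k, G.Adj i j ∧ G.Adj j k ∧ i ≠ k ∧ F = {i, j, k}) ∨
       (∃ i j, G.Adj i j ∧ (∀ k, G.Adj i k → k = j) ∧ (∀ k, G.Adj j k → k = i) ∧
          F = {i, j})}

/-- The set of Gallai indices of a graph `G`: triples `{i,j,k}` coming from two
distinct incident edges `{i,j}`, `{j,k}` of `G` not spanning a triangle, together
with pairs `{i,j}` for edges of `G` all of whose incident edges form a triangle
with `{i,j}`. -/
def gallaiIndices {V : Type*} [DecidableEq V] (G : SimpleGraph V) : Set (Finset V) :=
  {F | (∃ i j k, G.Adj i j ∧ G.Adj j k ∧ i ≠ k ∧ ¬ G.Adj i k ∧ F = {i, j, k}) ∨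
       (∃ i j, G.Adj i j ∧ (∀ k, k ≠ j → G.Adj i k → G.Adj j k) ∧
          (∀ k, k ≠ i → G.Adj j k → G.Adj i k) ∧ F = {i, j})}

/-- The set of anti-Gallai indices of a graph `G`: the vertex sets of
triangles of `G`. -/
def antiGallaiIndices {V : Type*} [DecidableEq V] (G : SimpleGraph V) : Set (Finset V) :=
  {F | ∃ i j k, G.Adj i j ∧ G.Adj j k ∧ G.Adj i k ∧ F = {i, j, k}}

/-- The line simplicial complex of `G`. -/
def lineComplex {V : Type*} [DecidableEq V] (G : SimpleGraph V) : Set (Finset V) :=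
  complexOf (lineIndices G)

/-- The Gallai simplicial complex of `G`. -/
def gallaiComplex {V : Type*} [DecidableEq V] (G : SimpleGraph V) : Set (Finset V) :=
  complexOf (gallaiIndices G)

/-- The anti-Gallai simplicial complex of `G`. -/
def antiGallaiComplex {V : Type*} [DecidableEq V] (G : SimpleGraph V) : Set (Finset V) :=
  complexOf (antiGallaiIndices G)

/-- The facets (maximal faces) of a simplicial complex. -/
def facets {V : Type*} (Δ : Set (Finset V)) : Set (Finset V) :=
  {F | F ∈ Δ ∧ ∀ G ∈ Δ, F ⊆ G → F = G}

/-- A simplicial complex is connected if any two facets are linked by a chain of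
facets in which consecutive facets intersect. -/
def ComplexConnected {V : Type*} [DecidableEq V] (Δ : Set (Finset V)) : Prop :=
  ∀ F ∈ facets Δ, ∀ F' ∈ facets Δ, ∃ (q : ℕ) (f : ℕ → Finset V),
    f 0 = F ∧ f q = F' ∧ (∀ i ≤ q, f i ∈ facets Δ) ∧
    ∀ i < q, (f i ∩ f (i + 1)).Nonempty

/-- The Euler characteristic `χ(Δ) = ∑ₖ (-1)ᵏ αₖ`, where `αₖ` is the number of
faces of `Δ` with exactly `k+1` vertices. -/
noncomputable def eulerChar {V : Type*} (Δ : Set (Finset V)) : ℤ :=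
  ∑ᶠ k : ℕ, (-1 : ℤ) ^ k * ({F ∈ Δ | F.card = k + 1}.ncard : ℤ)

/-- A simplicial complex is shellable if its facets can be enumerated
`F_0, …, F_{s-1}` so that for each `0 < i` the subcomplex
`⟨F_0, …, F_{i-1}⟩ ∩ ⟨F_i⟩` is pure of dimension `dim Fᵢ - 1`. -/
def Shellable {V : Type*} (Δ : Set (Finset V)) : Prop :=
  ∃ (s : ℕ) (l : Fin s → Finset V),
    Function.Injective l ∧
    (∀ i, l i ∈ facets Δ) ∧
    (∀ F ∈ facets Δ, ∃ i, F = l i) ∧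
    ∀ i : Fin s, 0 < (i : ℕ) →
      ∀ F ∈ facets {H | H ⊆ l i ∧ ∃ j, j < i ∧ H ⊆ l j}, F.card + 1 = (l i).card

/-- The wheel graph `W_{n+1}` on vertices `1, …, n+1` (hub `n+1`). -/
def wheelGraph (n : ℕ) : SimpleGraph ℕ :=
  SimpleGraph.fromRel (fun a b =>
    (1 ≤ a ∧ a + 1 ≤ n ∧ b = a + 1) ∨ (a = n ∧ b = 1) ∨
    (1 ≤ a ∧ a ≤ n ∧ b = n + 1))

/-- The friendship graph `F_n` on vertices `1, …, 2n+1` (center `2n+1`). -/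
def friendshipGraph (n : ℕ) : SimpleGraph ℕ :=
  SimpleGraph.fromRel (fun a b =>
    (∃ i, 1 ≤ i ∧ i ≤ n ∧ a = 2 * i - 1 ∧ b = 2 * i) ∨
    (1 ≤ a ∧ a ≤ 2 * n ∧ b = 2 * n + 1))

/-- The star graph `S_m` on vertices `1, …, m+1` (center `m+1`). -/
def starGraph (m : ℕ) : SimpleGraph ℕ :=
  SimpleGraph.fromRel (fun a b => 1 ≤ a ∧ a ≤ m ∧ b = m + 1)

/-- The cycle `C₅` on vertices `1, …, 5`. -/
def cycleFive : SimpleGraph ℕ :=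
  SimpleGraph.fromRel (fun a b =>
    (a = 1 ∧ b = 2) ∨ (a = 2 ∧ b = 3) ∨ (a = 3 ∧ b = 4) ∨
    (a = 4 ∧ b = 5) ∨ (a = 5 ∧ b = 1))

/-- The stacked prism graph `Y_{3,n}` on vertices `1, …, 3n`. -/
def prismGraph (n : ℕ) : SimpleGraph ℕ :=
  SimpleGraph.fromRel (fun a b =>
    (∃ k, k < n ∧ ((a = 3 * k + 1 ∧ b = 3 * k + 2) ∨
       (a = 3 * k + 2 ∧ b = 3 * k + 3) ∨ (a = 3 * k + 1 ∧ b = 3 * k + 3))) ∨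
    (∃ k j, k + 2 ≤ n ∧ 1 ≤ j ∧ j ≤ 3 ∧ a = 3 * k + j ∧ b = 3 * (k + 1) + j))

theorem reachable_of_mem_face {V : Type*} [DecidableEq V] {G : SimpleGraph V} {F : Finset V}
    (hF : F ∈ lineComplex G) {u v : V} (hu : u ∈ F) (hv : v ∈ F) : G.Reachable u v := by
  obtain ⟨A, hA, hFA⟩ := hF
  have hu := hFA hu
  have hv := hFA hv
  -- It suffices to compare all vertices of the line index with its vertex `j`.
  suffices ∃ j, ∀ x ∈ A, G.Reachable x j by
    obtain ⟨j, hj⟩ := this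
    exact (hj u hu).trans (hj v hv).symm
  rcases hA with ⟨i, j, k, hij, hjk, -, rfl⟩ | ⟨i, j, hij, -, -, rfl⟩
  · refine ⟨j, fun x hx => ?_⟩
    simp only [Finset.mem_insert, Finset.mem_singleton] at hx
    rcases hx with rfl | rfl | rfl
    exacts [hij.reachable, .refl _, hjk.symm.reachable]
  · refine ⟨j, fun x hx => ?_⟩
    simp only [Finset.mem_insert, Finset.mem_singleton] at hx
    rcases hx with rfl | rfl
    exacts [hij.reachable, .refl _]

theorem edge_mem_lineComplex {V : Type*} [DecidableEq V] {G : SimpleGraph V} {a b : V}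
    (h : G.Adj a b) : ({a, b} : Finset V) ∈ lineComplex G := by
  by_cases h₁ : ∀ k, G.Adj a k → k = b
  · by_cases h₂ : ∀ k, G.Adj b k → k = a
    · exact ⟨{a, b}, Or.inr ⟨a, b, h, h₁, h₂, rfl⟩, subset_rfl⟩
    · push Not at h₂
      obtain ⟨k, hbk, hka⟩ := h₂
      refine ⟨{a, b, k}, Or.inl ⟨a, b, k, h, hbk, hka.symm, rfl⟩, ?_⟩
      intro x; simp; tauto
  · push Not at h₁
    obtain ⟨k, hak, hkb⟩ := h₁
    refine ⟨{b, a, k}, Or.inl ⟨b, a, k, h.symm, hak, hkb.symm, rfl⟩, ?_⟩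
    intro x; simp; tauto

theorem exists_facet_of_adj {V : Type*} [Fintype V] [DecidableEq V] {G : SimpleGraph V} {a b : V}
    (h : G.Adj a b) : ∃ F ∈ facets (lineComplex G), a ∈ F ∧ b ∈ F := by
  obtain ⟨F, hle, hF⟩ :=
    (Set.toFinite (lineComplex G)).exists_le_maximal (edge_mem_lineComplex h)
  exact ⟨F, ⟨hF.prop, fun H hH hFH => hF.eq_of_le hH hFH⟩, hle (by simp), hle (by simp)⟩

/-- The presence of an edge prevents the empty face from being maximal. -/
theorem nonempty_of_mem_facets {V : Type*} [DecidableEq V] {G : SimpleGraph V}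
    (hedge : ∃ a b, G.Adj a b) {F : Finset V} (hF : F ∈ facets (lineComplex G)) : F.Nonempty := by
  obtain ⟨a, b, h⟩ := hedge
  rw [Finset.nonempty_iff_ne_empty]
  rintro rfl
  have := hF.2 _ (edge_mem_lineComplex h) (Finset.empty_subset _)
  exact Finset.insert_ne_empty _ _ this.symm

/-- Prepending a facet to a chain of facets. -/
theorem exists_chain_cons {V : Type*} [DecidableEq V] {Δ : Set (Finset V)} {F H F' : Finset V}
    (hF : F ∈ facets Δ) (hFH : (F ∩ H).Nonempty)
    (h : ∃ (q : ℕ) (f : ℕ → Finset V), f 0 = H ∧ f q = F' ∧ (∀ i ≤ q, f i ∈ facets Δ) ∧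
      ∀ i < q, (f i ∩ f (i + 1)).Nonempty) :
    ∃ (q : ℕ) (f : ℕ → Finset V), f 0 = F ∧ f q = F' ∧ (∀ i ≤ q, f i ∈ facets Δ) ∧
      ∀ i < q, (f i ∩ f (i + 1)).Nonempty := by
  obtain ⟨q, f, rfl, hq, hf, hn⟩ := h
  refine ⟨q + 1, fun n => Nat.casesOn n F f, rfl, hq, ?_, ?_⟩
  · rintro (_ | i) hi
    exacts [hF, hf i (by omega)]
  · rintro (_ | i) hi
    exacts [hFH, hn i (by omega)]

/-- A finite simple graph `G` with at least one edge and no isolated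
vertices is connected iff its line simplicial complex is connected. -/
theorem stmt0 {V : Type*} [Fintype V] [DecidableEq V] (G : SimpleGraph V)
    (hedge : ∃ a b, G.Adj a b) (hiso : ∀ v : V, ∃ w, G.Adj v w) :
    G.Connected ↔ ComplexConnected (lineComplex G) := by
  constructor
  · intro hG F hF F' hF'
    obtain ⟨u, hu⟩ := nonempty_of_mem_facets hedge hF
    obtain ⟨v, hv⟩ := nonempty_of_mem_facets hedge hF'
    obtain ⟨p⟩ := hG.preconnected u v
    induction p generalizing F with
    | nil =>
      refine exists_chain_cons hF ⟨_, Finset.mem_inter.2 ⟨hu, hv⟩⟩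
        ⟨0, fun _ => F', rfl, rfl, fun _ _ => hF', fun i hi => absurd hi (by omega)⟩
    | cons h p ih =>
      obtain ⟨H, hH, ha, hb⟩ := exists_facet_of_adj h
      exact exists_chain_cons hF ⟨_, Finset.mem_inter.2 ⟨hu, ha⟩⟩ (ih H hH hb hv)
  · intro hΔ
    obtain ⟨a, -, -⟩ := hedge
    have : Nonempty V := ⟨a⟩
    refine ⟨fun u v => ?_⟩
    obtain ⟨u', hu'⟩ := hiso u
    obtain ⟨v', hv'⟩ := hiso v
    obtain ⟨F, hF, hu, -⟩ := exists_facet_of_adj hu'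
    obtain ⟨F', hF', hv, -⟩ := exists_facet_of_adj hv'
    obtain ⟨q, f, rfl, rfl, hf, hn⟩ := hΔ F hF F' hF'
    have key : ∀ i ≤ q, ∀ x ∈ f i, G.Reachable u x := by
      intro i
      induction i with
      | zero => exact fun _ x hx => reachable_of_mem_face hF.1 hu hx
      | succ i ih =>
        intro hi x hx
        obtain ⟨y, hy⟩ := hn i (by omega)
        rw [Finset.mem_inter] at hy
        exact (ih (by omega) y hy.1).trans (reachable_of_mem_face (hf _ hi).1 hy.2 hx)
    exact key q le_rfl v hv
end

section
/- Let G be a connected finite simple graph on at least 4 vertices. Then the line simplicial complex Δ_L(G) is pure of dimension 2; that is, every facet of Δ_L(G) has exactly 3 vertices. -/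
/-!
Every facet of `Δ_L(G)` is a line index. A line index coming from two incident edges has
three distinct vertices, so it remains to exclude the isolated edges `{i, j}`. The vertex set of
such an edge is closed under adjacency, hence is all of `V` by connectedness; this is impossible
when `V` has more than two elements.
-/

open Finset

/-- If `G` is a connected finite simple graph on at least `4` vertices,
then the line simplicial complex `Δ_L(G)` is pure of dimension `2`: every facet has
exactly `3` vertices. -/
theorem stmt1 {V : Type*} [Fintype V] [DecidableEq V] (G : SimpleGraph V)
    (hcard : 4 ≤ Fintype.card V) (hconn : G.Connected) :
    ∀ F ∈ facets (lineComplex G), F.card = 3 := by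
  rintro F ⟨⟨A, hA, hFA⟩, hmax⟩
  -- A facet of a generated complex is itself one of the generators.
  obtain rfl : F = A := hmax A ⟨A, hA, subset_rfl⟩ hFA
  rcases hA with ⟨i, j, k, hij, hjk, hik, rfl⟩ | ⟨i, j, -, hi, hj, rfl⟩
  · exact card_eq_three.2 ⟨i, j, k, hij.ne, hik, hjk.ne, rfl⟩
  · exfalso
    obtain ⟨v, hv⟩ : ∃ v, v ∉ ({i, j} : Finset V) := by
      by_contra! h
      have h1 : ({i, j} : Finset V) = univ := eq_univ_iff_forall.2 h
      have h2 : ({i, j} : Finset V).card ≤ 2 := card_le_two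
      rw [h1, card_univ] at h2
      omega
    -- A walk from `i` to `v` must leave `{i, j}` along some edge, but no edge does.
    obtain ⟨p⟩ := hconn.preconnected i v
    obtain ⟨d, -, hd1, hd2⟩ :=
      p.exists_boundary_dart (({i, j} : Finset V) : Set V) (by simp) (by simpa using hv)
    have hadj := d.adj
    simp only [coe_insert, coe_singleton, Set.mem_insert_iff, Set.mem_singleton_iff] at hd1 hd2
    rcases hd1 with h | h
    · rw [h] at hadj
      exact hd2 (Or.inr (hi _ hadj))
    · rw [h] at hadj
      exact hd2 (Or.inl (hj _ hadj))
end

section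
/- Let G be a finite simple graph. Then χ(Δ_L(G)) = χ(Δ_Γ(G)) + |Ω_Γ'(G)|, where |Ω_Γ'(G)| is the number of anti-Gallai indices of G, i.e., the number of triangles of G. -/
/-!
The two complexes differ exactly in the triangles of `G`. A connected triple that is not a triangle
is a Gallai index. An edge is a face of both complexes: it is either a Gallai index itself or lies
in a Gallai triple (`mem_gallaiComplex_of_edge`). Hence proper subsets of a triangle are faces of
the Gallai complex, whereas a triangle is not, since it would have to equal a Gallai triple, which
has a missing edge. So the line complex is the disjoint union of the Gallai complex and the set of
triangles (`mem_lineComplex_iff`, `notMem_gallaiComplex_of_triangle`). Triangles have three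
vertices, so they contribute with sign `(-1) ^ 2 = 1` to the Euler characteristic.
-/

open Finset

theorem mem_gallaiComplex_of_edge {V : Type*} [DecidableEq V] {G : SimpleGraph V} {i j : V}
    (h : G.Adj i j) {F : Finset V} (hF : F ⊆ {i, j}) : F ∈ gallaiComplex G := by
  by_cases h1 : ∀ k, k ≠ j → G.Adj i k → G.Adj j k
  · by_cases h2 : ∀ k, k ≠ i → G.Adj j k → G.Adj i k
    · exact ⟨{i, j}, Or.inr ⟨i, j, h, h1, h2, rfl⟩, hF⟩
    · push Not at h2
      obtain ⟨k, hk, hjk, hik⟩ := h2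
      exact ⟨{i, j, k}, Or.inl ⟨i, j, k, h, hjk, hk.symm, hik, rfl⟩, by grind⟩
  · push Not at h1
    obtain ⟨k, hk, hik, hjk⟩ := h1
    exact ⟨{j, i, k}, Or.inl ⟨j, i, k, h.symm, hik, hk.symm, hjk, rfl⟩, by grind⟩

theorem mem_lineComplex_of_edge {V : Type*} [DecidableEq V] {G : SimpleGraph V} {i j : V}
    (h : G.Adj i j) {F : Finset V} (hF : F ⊆ {i, j}) : F ∈ lineComplex G := by
  by_cases h1 : ∀ k, G.Adj i k → k = j
  · by_cases h2 : ∀ k, G.Adj j k → k = i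
    · exact ⟨{i, j}, Or.inr ⟨i, j, h, h1, h2, rfl⟩, hF⟩
    · push Not at h2
      obtain ⟨k, hjk, hk⟩ := h2
      exact ⟨{i, j, k}, Or.inl ⟨i, j, k, h, hjk, hk.symm, rfl⟩, by grind⟩
  · push Not at h1
    obtain ⟨k, hik, hk⟩ := h1
    exact ⟨{j, i, k}, Or.inl ⟨j, i, k, h.symm, hik, hk.symm, rfl⟩, by grind⟩

theorem mem_lineComplex_iff {V : Type*} [DecidableEq V] (G : SimpleGraph V) (F : Finset V) :
    F ∈ lineComplex G ↔ F ∈ gallaiComplex G ∨ F ∈ antiGallaiIndices G := by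
  constructor
  · rintro ⟨A, ⟨i, j, k, hij, hjk, hik, rfl⟩ | ⟨i, j, hij, -, -, rfl⟩, hF⟩
    · by_cases h : G.Adj i k
      · by_cases hi : i ∈ F
        · by_cases hj : j ∈ F
          · by_cases hk : k ∈ F
            · exact Or.inr ⟨i, j, k, hij, hjk, h, by grind⟩
            · exact Or.inl (mem_gallaiComplex_of_edge hij (by grind))
          · exact Or.inl (mem_gallaiComplex_of_edge h (by grind))
        · exact Or.inl (mem_gallaiComplex_of_edge hjk (by grind))
      · exact Or.inl ⟨_, Or.inl ⟨i, j, k, hij, hjk, hik, h, rfl⟩, hF⟩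
    · exact Or.inl (mem_gallaiComplex_of_edge hij hF)
  · rintro (⟨A, ⟨i, j, k, hij, hjk, hik, -, rfl⟩ | ⟨i, j, hij, -, -, rfl⟩, hF⟩ |
      ⟨i, j, k, hij, hjk, hik, rfl⟩)
    · exact ⟨_, Or.inl ⟨i, j, k, hij, hjk, hik, rfl⟩, hF⟩
    · exact mem_lineComplex_of_edge hij hF
    · exact ⟨_, Or.inl ⟨i, j, k, hij, hjk, hik.ne, rfl⟩, Subset.rfl⟩

theorem card_of_mem_antiGallaiIndices {V : Type*} [DecidableEq V] {G : SimpleGraph V}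
    {F : Finset V} (hF : F ∈ antiGallaiIndices G) : F.card = 3 := by
  obtain ⟨i, j, k, hij, hjk, hik, rfl⟩ := hF
  exact card_eq_three.2 ⟨i, j, k, hij.ne, hik.ne, hjk.ne, rfl⟩

theorem notMem_gallaiComplex_of_triangle {V : Type*} [DecidableEq V] {G : SimpleGraph V}
    {F : Finset V} (hF : F ∈ antiGallaiIndices G) : F ∉ gallaiComplex G := by
  have hc := card_of_mem_antiGallaiIndices hF
  rintro ⟨A, ⟨i, j, k, hij, hjk, hik, hn, rfl⟩ | ⟨i, j, hij, -, -, rfl⟩, hA⟩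
  · have hEq : F = {i, j, k} := eq_of_subset_of_card_le hA (hc ▸ card_le_three)
    obtain ⟨a, b, c, hab, hbc, hac, rfl⟩ := hF
    have hi : i ∈ ({a, b, c} : Finset V) := by simp [hEq]
    have hk : k ∈ ({a, b, c} : Finset V) := by simp [hEq]
    simp only [mem_insert, mem_singleton] at hi hk
    -- Any two distinct vertices of a triangle are adjacent, contradicting `hn`.
    rcases hi with rfl | rfl | rfl <;> rcases hk with rfl | rfl | rfl <;>
      simp_all [G.adj_comm]
  · have := (card_le_card hA).trans card_le_two
    omega

theorem ncard_lineComplex_level {V : Type*} [Fintype V] [DecidableEq V] (G : SimpleGraph V)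
    (k : ℕ) :
    {F ∈ lineComplex G | F.card = k + 1}.ncard =
      {F ∈ gallaiComplex G | F.card = k + 1}.ncard +
        if k = 2 then (antiGallaiIndices G).ncard else 0 := by
  split_ifs with hk
  · subst hk
    rw [← Set.ncard_union_eq]
    · congr 1
      ext F
      have := @card_of_mem_antiGallaiIndices V _ G F
      simp only [Set.mem_ofPred_eq, Set.mem_union, mem_lineComplex_iff]
      tauto
    · exact Set.disjoint_left.2 fun F h h' => notMem_gallaiComplex_of_triangle h' h.1
  · rw [add_zero]
    congr 1
    ext F
    simp only [Set.mem_ofPred_eq, mem_lineComplex_iff]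
    constructor
    · rintro ⟨h | h, hc⟩
      · exact ⟨h, hc⟩
      · have := card_of_mem_antiGallaiIndices h
        omega
    · exact fun h => ⟨Or.inl h.1, h.2⟩

/-- Faces have at most `Fintype.card V` vertices, so the `finsum` defining the Euler characteristic
is a genuine finite sum. -/
theorem eulerChar_eq_sum {V : Type*} [Fintype V] (Δ : Set (Finset V)) {n : ℕ}
    (hn : Fintype.card V ≤ n) :
    eulerChar Δ =
      ∑ k ∈ range n, (-1 : ℤ) ^ k * ({F ∈ Δ | F.card = k + 1}.ncard : ℤ) := by
  apply finsum_eq_sum_of_support_subset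
  intro k hk
  rw [coe_range, Set.mem_Iio]
  by_contra! h
  refine hk ?_
  have : {F ∈ Δ | F.card = k + 1} = ∅ := by
    ext F
    have := F.card_le_univ
    simp only [Set.mem_ofPred_eq, Set.mem_empty_iff_false, iff_false]
    rintro ⟨-, hc⟩
    omega
  simp [this]

/-- `χ(Δ_L(G)) = χ(Δ_Γ(G)) + |Ω_Γ'(G)|` for any finite simple graph `G`. -/
theorem stmt2 {V : Type*} [Fintype V] [DecidableEq V] (G : SimpleGraph V) :
    eulerChar (lineComplex G) =
      eulerChar (gallaiComplex G) + ((antiGallaiIndices G).ncard : ℤ) := by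
  -- The `+ 3` puts the index `k = 2` in range even when `V` has fewer than three vertices.
  have hn : Fintype.card V ≤ Fintype.card V + 3 := by omega
  rw [eulerChar_eq_sum _ hn, eulerChar_eq_sum _ hn]
  simp [ncard_lineComplex_level, mul_add, sum_add_distrib]
end

section
/- For every n ≥ 1, the line simplicial complexes of the friendship graph F_n and of the star graph S_{2n} are equal: Δ_L(F_n) = Δ_L(S_{2n}). -/
/-!
Both line complexes are generated by the same line indices, namely the triples `{a, b, c}` with
`c = 2n + 1` the center and `a ≠ b` in `{1, …, 2n}`.  The center is joined to every other vertex, so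
each such triple is a path `a, c, b`; conversely no path on three vertices avoids the center,
because the edges of `F_n` off the center form a matching.  As `2n ≥ 2`, every edge meets another
one, so there are no two-element line indices.  `lineIndices_of_hub` carries this argument for both
graphs at once.
-/

open Finset

/-- If `m + 1` is joined to all of `1, …, m`, with `m ≥ 2`, and the edges avoiding `m + 1` are
pairwise disjoint, then the line indices are exactly the triples consisting of `m + 1` and two
other vertices. -/
lemma lineIndices_of_hub (G : SimpleGraph ℕ) (m : ℕ) (hm : 2 ≤ m)
    (hub : ∀ a, 1 ≤ a → a ≤ m → G.Adj a (m + 1))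
    (supp : ∀ a b, G.Adj a b → 1 ≤ a ∧ a ≤ m + 1)
    (path : ∀ i j k, G.Adj i j → G.Adj j k → i ≠ k → i = m + 1 ∨ j = m + 1 ∨ k = m + 1) :
    lineIndices G =
      {F | ∃ a b, 1 ≤ a ∧ a ≤ m ∧ 1 ≤ b ∧ b ≤ m ∧ a ≠ b ∧ F = {a, b, m + 1}} := by
  ext F
  constructor
  · rintro (⟨i, j, k, hij, hjk, hik, rfl⟩ | ⟨i, j, hij, hi, hj, rfl⟩)
    · have h1 := supp _ _ hij
      have h2 := supp _ _ hjk
      have h3 := supp _ _ hjk.symm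
      have h4 := hij.ne
      have h5 := hjk.ne
      rcases path i j k hij hjk hik with rfl | rfl | rfl
      · exact ⟨j, k, by omega, by omega, by omega, by omega, h5, by ext x; simp; tauto⟩
      · exact ⟨i, k, by omega, by omega, by omega, by omega, hik, by ext x; simp; tauto⟩
      · exact ⟨i, j, by omega, by omega, by omega, by omega, h4, rfl⟩
    · -- Isolation forces one end to be the hub; the hub is then adjacent to both `1` and `2`.
      exfalso
      have h1 := supp _ _ hij
      have h2 := supp _ _ hij.symm
      have e1 := (hub 1 (by omega) (by omega)).symm
      have e2 := (hub 2 (by omega) (by omega)).symm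
      by_cases hi' : i = m + 1
      · subst hi'
        have := hi 1 e1
        have := hi 2 e2
        omega
      · have hj' := hi _ (hub i h1.1 (by omega))
        subst hj'
        have := hj 1 e1
        have := hj 2 e2
        omega
  · rintro ⟨a, b, ha, ha', hb, hb', hab, rfl⟩
    exact Or.inl ⟨a, m + 1, b, hub a ha ha', (hub b hb hb').symm, hab, by ext x; simp; tauto⟩

/-- For every `n ≥ 1`, the line simplicial complexes of the friendship
graph `F_n` and of the star graph `S_{2n}` coincide. -/
theorem stmt4 (n : ℕ) (hn : 1 ≤ n) :
    lineComplex (friendshipGraph n) = lineComplex (starGraph (2 * n)) := by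
  have hF := lineIndices_of_hub (friendshipGraph n) (2 * n) (by omega)
    (by
      intro a h1 h2
      simp only [friendshipGraph, SimpleGraph.fromRel_adj]
      exact ⟨by omega, Or.inl (Or.inr ⟨h1, h2, trivial⟩)⟩)
    (by
      intro a b h
      simp only [friendshipGraph, SimpleGraph.fromRel_adj] at h
      obtain ⟨-, (⟨i, h⟩ | h) | (⟨i, h⟩ | h)⟩ := h <;> omega)
    (by
      intro i j k h h' hik
      simp only [friendshipGraph, SimpleGraph.fromRel_adj] at h h'
      obtain ⟨-, (⟨p, h⟩ | h) | (⟨p, h⟩ | h)⟩ := h <;>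
        obtain ⟨-, (⟨q, h'⟩ | h') | (⟨q, h'⟩ | h')⟩ := h' <;> omega)
  have hS := lineIndices_of_hub (starGraph (2 * n)) (2 * n) (by omega)
    (by
      intro a h1 h2
      simp only [starGraph, SimpleGraph.fromRel_adj]
      exact ⟨by omega, Or.inl ⟨h1, h2, trivial⟩⟩)
    (by
      intro a b h
      simp only [starGraph, SimpleGraph.fromRel_adj] at h
      omega)
    (by
      intro i j k h h' hik
      simp only [starGraph, SimpleGraph.fromRel_adj] at h h'
      omega)
  rw [lineComplex, lineComplex, hF, hS]
end

section
/- For every n ≥ 4, the number of 2-dimensional faces (faces with exactly 3 vertices) of the line simplicial complex Δ_L(W_{n+1}) of the wheel graph W_{n+1} equals n(n+1)/2. -/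
/-!
A face with three vertices of a line complex is a line index `{i, j, k}` of a path `i - j - k`,
because line indices have at most three elements. In the wheel with hub `n + 1` there are two
disjoint kinds of such triples. Those containing the hub are all the sets `{a, b, n + 1}` with
`a ≠ b` on the rim, since `a - (n + 1) - b` is a path; there are `n.choose 2` of them. Those
avoiding the hub come from a path inside the rim cycle, so they are the `n` cyclic intervals
`{j, j + 1, j + 2}`, pairwise distinct and of cardinality three because `n ≥ 4`. In total there
are `n.choose 2 + n = n * (n + 1) / 2` faces.
-/

open Finset

/-- The successor of `j` on the rim cycle `1, …, n`. -/
def rimNext (n j : ℕ) : ℕ := if j = n then 1 else j + 1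

/-- The cyclic interval of length three on the rim starting at `j`. -/
def rimTriple (n j : ℕ) : Finset ℕ := {j, rimNext n j, rimNext n (rimNext n j)}

theorem rimNext_mem {n j : ℕ} (hj : j ∈ Icc 1 n) : rimNext n j ∈ Icc 1 n := by
  simp only [mem_Icc, rimNext] at *
  split_ifs <;> omega

theorem rimNext_inj {n i j : ℕ} (hi : i ∈ Icc 1 n) (hj : j ∈ Icc 1 n)
    (h : rimNext n i = rimNext n j) : i = j := by
  simp only [mem_Icc, rimNext] at *
  split_ifs at h <;> omega

theorem wheel_adj_iff {n : ℕ} (hn : 4 ≤ n) (a b : ℕ) :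
    (wheelGraph n).Adj a b ↔
      (a ∈ Icc 1 n ∧ b ∈ Icc 1 n ∧ (b = rimNext n a ∨ a = rimNext n b)) ∨
      (a ∈ Icc 1 n ∧ b = n + 1) ∨ (a = n + 1 ∧ b ∈ Icc 1 n) := by
  simp only [wheelGraph, SimpleGraph.fromRel_adj, mem_Icc, rimNext]
  split_ifs <;> omega

theorem mem_lineComplex_card_three {V : Type*} [DecidableEq V] (G : SimpleGraph V)
    (F : Finset V) (hF : F.card = 3) :
    F ∈ lineComplex G ↔ ∃ i j k, G.Adj i j ∧ G.Adj j k ∧ i ≠ k ∧ F = {i, j, k} := by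
  constructor
  · rintro ⟨A, ⟨i, j, k, hij, hjk, hik, rfl⟩ | ⟨i, j, -, -, -, rfl⟩, hFA⟩
    · exact ⟨i, j, k, hij, hjk, hik, eq_of_subset_of_card_le hFA (hF ▸ card_le_three)⟩
    · have h1 := card_le_card hFA
      have h2 : ({i, j} : Finset V).card ≤ 2 := card_le_two
      omega
  · intro h
    exact ⟨F, Or.inl h, Subset.rfl⟩

theorem card_rimTriple {n : ℕ} (hn : 4 ≤ n) (j : ℕ) : (rimTriple n j).card = 3 := by
  rw [rimTriple, card_eq_three]
  refine ⟨_, _, _, ?_, ?_, ?_, rfl⟩ <;> simp only [rimNext] <;> split_ifs <;> omega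

theorem rimTriple_subset {n j : ℕ} (hj : j ∈ Icc 1 n) : rimTriple n j ⊆ Icc 1 n := by
  intro x hx
  simp only [rimTriple, mem_insert, mem_singleton] at hx
  rcases hx with rfl | rfl | rfl
  exacts [hj, rimNext_mem hj, rimNext_mem (rimNext_mem hj)]

/-- This needs `n ≥ 4`: for `n = 3` every cyclic interval is the whole rim. -/
theorem rimTriple_injOn {n : ℕ} (hn : 4 ≤ n) : Set.InjOn (rimTriple n) (Icc 1 n : Finset ℕ) := by
  intro i hi j hj h
  have h1 : i ∈ rimTriple n j := h ▸ by simp [rimTriple]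
  have h2 : rimNext n i ∈ rimTriple n j := h ▸ by simp [rimTriple]
  have h3 : rimNext n (rimNext n i) ∈ rimTriple n j := h ▸ by simp [rimTriple]
  simp only [rimTriple, mem_insert, mem_singleton, rimNext, coe_Icc, Set.mem_Icc] at *
  clear h
  split_ifs at * <;> omega

/-- A path `i - j - k` inside the rim runs around the cycle in one of the two directions, so
its vertex set is a cyclic interval starting at `i` or at `k`. -/
theorem rim_path {n i j k : ℕ} (hi : i ∈ Icc 1 n) (hk : k ∈ Icc 1 n)
    (hij : j = rimNext n i ∨ i = rimNext n j) (hjk : k = rimNext n j ∨ j = rimNext n k)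
    (hik : i ≠ k) : ∃ a ∈ Icc 1 n, rimTriple n a = {i, j, k} := by
  rcases hij with h1 | h1 <;> rcases hjk with h2 | h2
  · exact ⟨i, hi, by rw [rimTriple, ← h1, ← h2]⟩
  · exact absurd (rimNext_inj hi hk (h1.symm.trans h2)) hik
  · exact absurd (h1.trans h2.symm) hik
  · refine ⟨k, hk, ?_⟩
    rw [rimTriple, ← h2, ← h1]
    ext x
    simp only [mem_insert, mem_singleton]
    tauto

theorem faces_eq {n : ℕ} (hn : 4 ≤ n) :
    {F ∈ lineComplex (wheelGraph n) | F.card = 3} =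
      (((powersetCard 2 (Icc 1 n)).image (insert (n + 1)) ∪
        (Icc 1 n).image (rimTriple n) : Finset (Finset ℕ)) : Set (Finset ℕ)) := by
  have hub : n + 1 ∉ Icc 1 n := by simp
  ext F
  simp only [Set.mem_ofPred_eq, coe_union, coe_image, Set.mem_union, Set.mem_image, mem_coe,
    mem_powersetCard]
  constructor
  · rintro ⟨hF, hc⟩
    obtain ⟨i, j, k, hij, hjk, hik, rfl⟩ := (mem_lineComplex_card_three _ _ hc).1 hF
    have hne1 := hij.ne
    have hne2 := hjk.ne
    rw [wheel_adj_iff hn] at hij hjk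
    have key : ∀ a b, a ∈ Icc 1 n → b ∈ Icc 1 n → a ≠ b →
        ({i, j, k} : Finset ℕ) = insert (n + 1) {a, b} →
        ∃ x, (x ⊆ Icc 1 n ∧ x.card = 2) ∧ insert (n + 1) x = ({i, j, k} : Finset ℕ) := by
      intro a b ha hb hab h
      exact ⟨{a, b}, ⟨by simp [insert_subset_iff, ha, hb, -mem_Icc], card_pair hab⟩, h.symm⟩
    rcases hij with ⟨hi, hj, hij⟩ | ⟨hi, rfl⟩ | ⟨rfl, hj⟩
    · rcases hjk with ⟨-, hk, hjk⟩ | ⟨-, rfl⟩ | ⟨rfl, -⟩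
      · exact Or.inr (rim_path hi hk hij hjk hik)
      · refine Or.inl (key i j hi hj hne1 ?_)
        ext x
        simp only [mem_insert, mem_singleton]
        tauto
      · exact absurd hj hub
    · rcases hjk with ⟨hj, -, -⟩ | ⟨hj, -⟩ | ⟨-, hk⟩
      · exact absurd hj hub
      · exact absurd hj hub
      · exact Or.inl (key i k hi hk hik (insert_comm _ _ _))
    · rcases hjk with ⟨-, hk, -⟩ | ⟨-, rfl⟩ | ⟨rfl, -⟩
      · exact Or.inl (key j k hj hk hne2 rfl)
      · exact absurd rfl hik
      · exact absurd hj hub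
  · rintro (⟨x, ⟨hx, hx2⟩, rfl⟩ | ⟨j, hj, rfl⟩)
    · have hc : (insert (n + 1) x).card = 3 := by
        rw [card_insert_of_notMem fun h => hub (hx h), hx2]
      refine ⟨(mem_lineComplex_card_three _ _ hc).2 ?_, hc⟩
      obtain ⟨a, b, hab, rfl⟩ := card_eq_two.1 hx2
      have ha : a ∈ Icc 1 n := hx (by simp)
      have hb : b ∈ Icc 1 n := hx (by simp)
      exact ⟨a, n + 1, b, (wheel_adj_iff hn _ _).2 (Or.inr (Or.inl ⟨ha, rfl⟩)),
        (wheel_adj_iff hn _ _).2 (Or.inr (Or.inr ⟨rfl, hb⟩)), hab, insert_comm _ _ _⟩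
    · have hc := card_rimTriple hn j
      refine ⟨(mem_lineComplex_card_three _ _ hc).2 ?_, hc⟩
      have hj1 := rimNext_mem hj
      refine ⟨_, _, _, (wheel_adj_iff hn _ _).2 (Or.inl ⟨hj, hj1, Or.inl rfl⟩),
        (wheel_adj_iff hn _ _).2 (Or.inl ⟨hj1, rimNext_mem hj1, Or.inl rfl⟩), ?_, rfl⟩
      simp only [mem_Icc, rimNext] at *
      split_ifs <;> omega

/-- For `n ≥ 4`, the number of `2`-dimensional faces of
`Δ_L(W_{n+1})` equals `n(n+1)/2`. -/
theorem stmt5 (n : ℕ) (hn : 4 ≤ n) :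
    {F ∈ lineComplex (wheelGraph n) | F.card = 3}.ncard = n * (n + 1) / 2 := by
  have hub : n + 1 ∉ Icc 1 n := by simp
  rw [faces_eq hn, Set.ncard_coe_finset, card_union_of_disjoint, card_image_of_injOn,
    card_image_of_injOn (rimTriple_injOn hn), card_powersetCard, Nat.card_Icc,
    Nat.add_sub_cancel, Nat.choose_two_right]
  · obtain ⟨m, rfl⟩ : ∃ m, n = m + 1 := ⟨n - 1, by omega⟩
    have h : (m + 1) * (m + 1 + 1) = (m + 1) * m + (m + 1) * 2 := by ring
    rw [h, Nat.add_mul_div_right _ _ two_pos, Nat.add_sub_cancel]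
  · intro x hx y hy h
    simp only [mem_coe, mem_powersetCard] at hx hy
    rw [← erase_insert fun h' => hub (hx.1 h'), ← erase_insert fun h' => hub (hy.1 h')]
    exact congrArg (fun s => s.erase (n + 1)) h
  · rw [disjoint_left]
    intro F h1 h2
    obtain ⟨x, -, rfl⟩ := mem_image.1 h1
    obtain ⟨j, hj, h⟩ := mem_image.1 h2
    exact hub (rimTriple_subset hj (h ▸ mem_insert_self _ _))
end

section
/- For every n ≥ 4, every 2-element subset of {1,…,n+1} is a face of the line simplicial complex Δ_L(W_{n+1}) of the wheel graph W_{n+1}; in particular the number of 1-dimensional faces of Δ_L(W_{n+1}) equals n(n+1)/2. -/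
/-!
The hub `n + 1` is adjacent to every rim vertex, so for distinct rim vertices `a`, `b` the triple
`{a, n + 1, b}` is a line index. Every pair of vertices lies in such a triple: a pair of rim
vertices directly, and a pair `{a, n + 1}` after choosing any further rim vertex `b`.
Conversely, edges of the wheel join vertices of `{1, …, n + 1}` only, so every face is a subset
of that set. Hence the `1`-dimensional faces are exactly the `2`-element subsets of
`{1, …, n + 1}`, of which there are `(n + 1).choose 2`.
-/

open Finset

/-- The spokes: every rim vertex is adjacent to the hub. -/
theorem wheelGraph_adj_hub {n a : ℕ} (h1 : 1 ≤ a) (h2 : a ≤ n) :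
    (wheelGraph n).Adj a (n + 1) := by
  rw [wheelGraph, SimpleGraph.fromRel_adj]
  exact ⟨by omega, Or.inl (Or.inr (Or.inr ⟨h1, h2, rfl⟩))⟩

/-- The vertex set is all of `ℕ`, but edges only involve `1, …, n + 1`; here `n ≠ 0` is needed,
since `0` and `1` are adjacent in `wheelGraph 0`. -/
theorem wheelGraph_adj_mem {n a b : ℕ} (hn : 1 ≤ n) (h : (wheelGraph n).Adj a b) :
    a ∈ Finset.Icc 1 (n + 1) ∧ b ∈ Finset.Icc 1 (n + 1) := by
  rw [wheelGraph, SimpleGraph.fromRel_adj] at h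
  simp only [Finset.mem_Icc]
  omega

theorem subset_of_mem_lineComplex_wheelGraph {n : ℕ} (hn : 1 ≤ n) {F : Finset ℕ}
    (h : F ∈ lineComplex (wheelGraph n)) : F ⊆ Finset.Icc 1 (n + 1) := by
  obtain ⟨A, hA, hFA⟩ := h
  refine hFA.trans ?_
  rcases hA with ⟨i, j, k, hij, hjk, -, rfl⟩ | ⟨i, j, hij, -, -, rfl⟩
  · simp only [Finset.insert_subset_iff, Finset.singleton_subset_iff]
    exact ⟨(wheelGraph_adj_mem hn hij).1, wheelGraph_adj_mem hn hjk⟩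
  · simp only [Finset.insert_subset_iff, Finset.singleton_subset_iff]
    exact wheelGraph_adj_mem hn hij

/-- Two distinct spokes form a line index, so any subset of `{a, n + 1, b}` is a face. -/
theorem mem_lineComplex_wheelGraph_of_subset {n a b : ℕ} {F : Finset ℕ}
    (ha1 : 1 ≤ a) (ha : a ≤ n) (hb1 : 1 ≤ b) (hb : b ≤ n) (hab : a ≠ b)
    (hF : F ⊆ {a, n + 1, b}) : F ∈ lineComplex (wheelGraph n) :=
  ⟨{a, n + 1, b}, Or.inl ⟨a, n + 1, b, wheelGraph_adj_hub ha1 ha,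
    (wheelGraph_adj_hub hb1 hb).symm, hab, rfl⟩, hF⟩

theorem exists_rim_ne {n : ℕ} (hn : 2 ≤ n) (a : ℕ) : ∃ c, 1 ≤ c ∧ c ≤ n ∧ a ≠ c := by
  by_cases h : a = 1
  · exact ⟨2, by omega, hn, by omega⟩
  · exact ⟨1, le_rfl, by omega, h⟩

theorem pair_mem_lineComplex_wheelGraph {n : ℕ} (hn : 2 ≤ n) {F : Finset ℕ}
    (hF : F ⊆ Finset.Icc 1 (n + 1)) (hc : F.card = 2) : F ∈ lineComplex (wheelGraph n) := by
  obtain ⟨a, b, hab, rfl⟩ := Finset.card_eq_two.mp hc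
  simp only [Finset.insert_subset_iff, Finset.singleton_subset_iff, Finset.mem_Icc] at hF
  obtain ⟨⟨ha1, ha⟩, hb1, hb⟩ := hF
  by_cases hbn : b = n + 1
  · obtain ⟨c, hc1, hc, hac⟩ := exists_rim_ne hn a
    exact mem_lineComplex_wheelGraph_of_subset ha1 (by omega) hc1 hc hac
      (by intro x; simp; omega)
  · by_cases han : a = n + 1
    · obtain ⟨c, hc1, hc, hbc⟩ := exists_rim_ne hn b
      exact mem_lineComplex_wheelGraph_of_subset hb1 (by omega) hc1 hc hbc
        (by intro x; simp; omega)
    · exact mem_lineComplex_wheelGraph_of_subset ha1 (by omega) hb1 (by omega) hab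
        (by intro x; simp; omega)

/-- For `n ≥ 4`, every `2`-element subset of `{1, …, n+1}` is a face of
`Δ_L(W_{n+1})`; in particular the number of `1`-dimensional faces equals `n(n+1)/2`. -/
theorem stmt6 (n : ℕ) (hn : 4 ≤ n) :
    (∀ F : Finset ℕ, F ⊆ Finset.Icc 1 (n + 1) → F.card = 2 →
       F ∈ lineComplex (wheelGraph n)) ∧
    {F ∈ lineComplex (wheelGraph n) | F.card = 2}.ncard = n * (n + 1) / 2 := by
  refine ⟨fun F hF hc => pair_mem_lineComplex_wheelGraph (by omega) hF hc, ?_⟩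
  have h : {F ∈ lineComplex (wheelGraph n) | F.card = 2} =
      ((Finset.powersetCard 2 (Finset.Icc 1 (n + 1)) : Finset (Finset ℕ)) :
        Set (Finset ℕ)) := by
    ext F
    simp only [Set.mem_ofPred_eq, Finset.mem_coe, Finset.mem_powersetCard]
    exact ⟨fun ⟨hF, hc⟩ => ⟨subset_of_mem_lineComplex_wheelGraph (by omega) hF, hc⟩,
      fun ⟨hF, hc⟩ => ⟨pair_mem_lineComplex_wheelGraph (by omega) hF hc, hc⟩⟩
  rw [h, Set.ncard_coe_finset, Finset.card_powersetCard, Nat.card_Icc, Nat.choose_two_right]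
  simp [Nat.mul_comm]
end

section
/- For every n ≥ 2, the number of 2-dimensional faces (faces with exactly 3 vertices) of the Gallai simplicial complex Δ_Γ(F_n) of the friendship graph F_n equals 2n(n−1). -/
/-!
In the friendship graph `F_n` every edge off the center spans a triangle with the center, so a
path `i - j - k` with `i`, `k` non-adjacent must have the center `2n+1` as its middle vertex
(`friendshipGraph_path`). The remaining Gallai indices are pairs, too small to contain a face
with three vertices. Hence the faces with three vertices are exactly the sets
`{2n+1} ∪ {a, b}` where `{a, b} ⊆ {1, …, 2n}` is not one of the `n` edges `{2i-1, 2i}`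
(`gallaiFaces_eq`), and there are `(2n choose 2) - n = 2n(n-1)` of those.
-/

open Finset

/-- Adjacency in `F_n`, with the index of the edge `{2i-1, 2i}` replaced by a parity condition,
so that the condition is a formula of linear arithmetic. -/
lemma friendshipGraph_adj (n a b : ℕ) : (friendshipGraph n).Adj a b ↔
    (1 ≤ a ∧ a ≤ 2 * n ∧ a % 2 = 1 ∧ b = a + 1) ∨ (1 ≤ b ∧ b ≤ 2 * n ∧ b % 2 = 1 ∧ a = b + 1) ∨
    (1 ≤ a ∧ a ≤ 2 * n ∧ b = 2 * n + 1) ∨ (1 ≤ b ∧ b ≤ 2 * n ∧ a = 2 * n + 1) := by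
  have key : ∀ x y : ℕ, (∃ i, 1 ≤ i ∧ i ≤ n ∧ x = 2 * i - 1 ∧ y = 2 * i) ↔
      (1 ≤ x ∧ x ≤ 2 * n ∧ x % 2 = 1 ∧ y = x + 1) := by
    intro x y
    constructor
    · rintro ⟨i, h1, h2, h3, h4⟩
      omega
    · intro h
      exact ⟨(x + 1) / 2, by omega, by omega, by omega, by omega⟩
  simp only [friendshipGraph, SimpleGraph.fromRel_adj, key]
  omega

/-- Two distinct non-adjacent vertices of `F_n` have only the center as a common neighbor. -/
lemma friendshipGraph_path {n i j k : ℕ} (hij : (friendshipGraph n).Adj i j)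
    (hjk : (friendshipGraph n).Adj j k) (hne : i ≠ k) (hik : ¬ (friendshipGraph n).Adj i k) :
    j = 2 * n + 1 ∧ (1 ≤ i ∧ i ≤ 2 * n) ∧ (1 ≤ k ∧ k ≤ 2 * n) := by
  rw [friendshipGraph_adj] at hij hjk hik
  omega

/-- The edges `{2i-1, 2i}` of `F_n` that avoid the center. -/
def blades (n : ℕ) : Finset (Finset ℕ) :=
  (Icc 1 n).image fun i => {2 * i - 1, 2 * i}

lemma pair_mem_blades {n a b : ℕ} (ha : 1 ≤ a ∧ a ≤ 2 * n) (hb : 1 ≤ b ∧ b ≤ 2 * n) :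
    ({a, b} : Finset ℕ) ∈ blades n ↔ (friendshipGraph n).Adj a b := by
  rw [friendshipGraph_adj]
  simp only [blades, mem_image, mem_Icc]
  constructor
  · rintro ⟨i, hi, h⟩
    have h1 : 2 * i - 1 ∈ ({a, b} : Finset ℕ) := h ▸ by simp
    have h2 : 2 * i ∈ ({a, b} : Finset ℕ) := h ▸ by simp
    simp only [mem_insert, mem_singleton] at h1 h2
    omega
  · intro h
    refine ⟨(a + b + 1) / 4, by omega, ?_⟩
    ext x
    simp only [mem_insert, mem_singleton]
    omega

lemma card_blades (n : ℕ) : (blades n).card = n := by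
  rw [blades, card_image_of_injOn, Nat.card_Icc, Nat.add_sub_cancel]
  intro i hi j hj (h : ({2 * i - 1, 2 * i} : Finset ℕ) = {2 * j - 1, 2 * j})
  simp only [coe_Icc, Set.mem_Icc] at hi hj
  have h1 : 2 * i ∈ ({2 * j - 1, 2 * j} : Finset ℕ) := by rw [← h]; simp
  simp only [mem_insert, mem_singleton] at h1
  omega

lemma blades_subset (n : ℕ) : blades n ⊆ powersetCard 2 (Icc 1 (2 * n)) := by
  intro s hs
  obtain ⟨i, hi, rfl⟩ := mem_image.1 hs
  rw [mem_Icc] at hi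
  rw [mem_powersetCard]
  refine ⟨fun x hx => ?_, card_pair (by omega)⟩
  simp only [mem_insert, mem_singleton] at hx
  rw [mem_Icc]
  omega

/-- The faces with three vertices are the cones from the center over the pairs of outer vertices
that are not edges. -/
lemma gallaiFaces_eq (n : ℕ) :
    {F ∈ gallaiComplex (friendshipGraph n) | F.card = 3} =
      ↑((powersetCard 2 (Icc 1 (2 * n)) \ blades n).image (insert (2 * n + 1))) := by
  ext F
  simp only [Set.mem_ofPred_eq, coe_image, Set.mem_image, mem_coe, mem_sdiff, mem_powersetCard]
  constructor
  · rintro ⟨⟨A, hA, hFA⟩, hF⟩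
    rcases hA with ⟨i, j, k, hij, hjk, hne, hik, rfl⟩ | ⟨i, j, -, -, -, rfl⟩
    · obtain ⟨rfl, hi, hk⟩ := friendshipGraph_path hij hjk hne hik
      have hFe := eq_of_subset_of_card_le hFA (card_le_three.trans hF.ge)
      refine ⟨{i, k}, ⟨⟨?_, card_pair hne⟩, ?_⟩, ?_⟩
      · intro x hx
        simp only [mem_insert, mem_singleton] at hx
        rw [mem_Icc]
        omega
      · rwa [pair_mem_blades hi hk]
      · rw [hFe, insert_comm]
    · have h1 := card_le_card hFA
      have h2 : ({i, j} : Finset ℕ).card ≤ 2 := card_le_two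
      omega
  · rintro ⟨s, ⟨⟨hs, hc⟩, hb⟩, rfl⟩
    obtain ⟨a, b, hab, rfl⟩ := card_eq_two.1 hc
    have ha : 1 ≤ a ∧ a ≤ 2 * n := mem_Icc.1 (hs (by simp))
    have hb' : 1 ≤ b ∧ b ≤ 2 * n := mem_Icc.1 (hs (by simp))
    rw [pair_mem_blades ha hb'] at hb
    refine ⟨⟨{a, 2 * n + 1, b}, Or.inl ⟨a, 2 * n + 1, b, ?_, ?_, hab, hb, rfl⟩, ?_⟩, ?_⟩
    · rw [friendshipGraph_adj]
      omega
    · rw [friendshipGraph_adj]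
      omega
    · rw [insert_comm]
    · exact card_eq_three.2 ⟨_, a, b, by omega, by omega, hab, rfl⟩

/-- For `n ≥ 2`, the number of `2`-dimensional faces of
`Δ_Γ(F_n)` equals `2n(n-1)`. -/
theorem stmt10 (n : ℕ) (hn : 2 ≤ n) :
    {F ∈ gallaiComplex (friendshipGraph n) | F.card = 3}.ncard = 2 * n * (n - 1) := by
  have hinj : Set.InjOn (insert (2 * n + 1) : Finset ℕ → Finset ℕ)
      ↑(powersetCard 2 (Icc 1 (2 * n)) \ blades n) := by
    have hnot : ∀ s ∈ powersetCard 2 (Icc 1 (2 * n)) \ blades n, 2 * n + 1 ∉ s := by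
      intro s hs h
      have := mem_Icc.1 ((mem_powersetCard.1 (mem_sdiff.1 hs).1).1 h)
      omega
    intro s hs t ht h
    rw [← erase_insert (hnot s hs), h, erase_insert (hnot t ht)]
  rw [gallaiFaces_eq, Set.ncard_coe_finset, card_image_of_injOn hinj,
    card_sdiff_of_subset (blades_subset n), card_powersetCard, card_blades, Nat.card_Icc,
    Nat.add_sub_cancel, Nat.choose_two_right, mul_assoc,
    Nat.mul_div_cancel_left _ (by norm_num : 0 < 2)]
  obtain ⟨m, rfl⟩ := Nat.exists_eq_add_of_le hn
  have h1 : 2 * (2 + m) - 1 = 2 * m + 3 := by omega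
  have h2 : 2 + m - 1 = m + 1 := by omega
  rw [h1, h2, Nat.sub_eq_iff_eq_add (by nlinarith)]
  ring
end

section
/- For every n ≥ 2, the Euler characteristic of the Gallai simplicial complex of the friendship graph F_n is χ(Δ_Γ(F_n)) = 1 − n. -/
/-!
Write `c = 2n+1` for the centre of `F_n`. Two distinct outer vertices `a, b ≤ 2n` are adjacent
exactly when `⌈a/2⌉ = ⌈b/2⌉`, so a path of length two spans no triangle exactly when it is
`a - c - b` with `⌈a/2⌉ ≠ ⌈b/2⌉`; and the only edges all of whose incident edges close up to a
triangle are the outer edges `{2i-1, 2i}` (for `n ≥ 2` the spokes `{j, c}` are not of this kind).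
Hence (`mem_gallaiComplex_friendship`) the complex is generated by these triples `{a, b, c}` and
the `n` pairs `{2i-1, 2i}`. All `2n+1` vertices and all `(2n+1).choose 2` pairs are faces,
the two-dimensional faces are the `(2n).choose 2 - n` triples `{a, b, c}`, and there are no larger
faces, so the Euler characteristic is `(2n+1) - n(2n+1) + (n(2n-1) - n) = 1 - n`.
-/

open Finset

/-- Adjacency in `F_n` in purely arithmetical form: `(a + 1) / 2` is the index of the
triangle containing the outer vertex `a`. -/
lemma friendship_adj (n a b : ℕ) : (friendshipGraph n).Adj a b ↔
    a ≠ b ∧ 1 ≤ a ∧ 1 ≤ b ∧ a ≤ 2 * n + 1 ∧ b ≤ 2 * n + 1 ∧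
      (a = 2 * n + 1 ∨ b = 2 * n + 1 ∨ (a + 1) / 2 = (b + 1) / 2) := by
  unfold friendshipGraph
  rw [SimpleGraph.fromRel_adj]
  constructor
  · rintro ⟨h, (⟨i, hi⟩ | h1) | (⟨i, hi⟩ | h1)⟩ <;> omega
  · rintro ⟨h, h1, h2, h3, h4, h5⟩
    refine ⟨h, ?_⟩
    by_cases ha : a = 2 * n + 1
    · right; right; omega
    by_cases hb : b = 2 * n + 1
    · left; right; omega
    rcases lt_or_gt_of_ne h with hl | hl
    · left; left; exact ⟨(a + 1) / 2, by omega⟩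
    · right; left; exact ⟨(a + 1) / 2, by omega⟩

lemma mem_gallaiComplex_friendship {n : ℕ} (hn : 2 ≤ n) (F : Finset ℕ) :
    F ∈ gallaiComplex (friendshipGraph n) ↔
      (∃ a b, 1 ≤ a ∧ a ≤ 2 * n ∧ 1 ≤ b ∧ b ≤ 2 * n ∧ (a + 1) / 2 ≠ (b + 1) / 2 ∧
        F ⊆ {a, b, 2 * n + 1}) ∨
      (∃ i, 1 ≤ i ∧ i ≤ n ∧ F ⊆ {2 * i - 1, 2 * i}) := by
  unfold gallaiComplex complexOf gallaiIndices
  simp only [Set.mem_ofPred_eq, friendship_adj]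
  constructor
  · rintro ⟨A, ⟨i, j, k, h1, h2, h3, h4, rfl⟩ | ⟨i, j, h1, h2, h3, rfl⟩, hF⟩
    · left
      refine ⟨i, k, by omega, by omega, by omega, by omega, by omega, ?_⟩
      obtain rfl : j = 2 * n + 1 := by omega
      rwa [Finset.pair_comm k]
    · right
      -- An outer vertex in another triangle than `x` rules out that `{x, c}` is an edge index.
      have key : ∀ x, 1 ≤ x → x ≤ 2 * n → ∃ y, 1 ≤ y ∧ y ≤ 2 * n ∧ (x + 1) / 2 ≠ (y + 1) / 2 :=
        fun x _ _ => ⟨if x ≤ 2 then 3 else 1, by split_ifs <;> omega⟩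
      have hi : i ≠ 2 * n + 1 := by
        intro hi
        obtain ⟨y, hy⟩ := key j (by omega) (by omega)
        have := h2 y
        omega
      have hj : j ≠ 2 * n + 1 := by
        intro hj
        obtain ⟨y, hy⟩ := key i (by omega) (by omega)
        have := h3 y
        omega
      refine ⟨(i + 1) / 2, by omega, by omega, hF.trans ?_⟩
      intro x
      simp only [Finset.mem_insert, Finset.mem_singleton]
      omega
  · rintro (⟨a, b, h1, h2, h3, h4, h5, hF⟩ | ⟨i, h1, h2, hF⟩)
    · refine ⟨{a, 2 * n + 1, b}, Or.inl ⟨a, 2 * n + 1, b, by omega, by omega, by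
        rintro rfl; exact h5 rfl, by omega, rfl⟩, ?_⟩
      rwa [Finset.pair_comm (2 * n + 1)]
    · exact ⟨_, Or.inr ⟨2 * i - 1, 2 * i, by omega, by intros; omega, by intros; omega, rfl⟩, hF⟩

lemma gallai_face_subset {n : ℕ} (hn : 2 ≤ n) {F : Finset ℕ}
    (hF : F ∈ gallaiComplex (friendshipGraph n)) : F ⊆ Finset.Icc 1 (2 * n + 1) := by
  rw [mem_gallaiComplex_friendship hn] at hF
  rcases hF with ⟨a, b, h1, h2, h3, h4, h5, hF⟩ | ⟨i, h1, h2, hF⟩ <;> intro x hx <;>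
    have := hF hx <;> simp only [Finset.mem_insert, Finset.mem_singleton, Finset.mem_Icc] at * <;>
    omega

lemma gallai_face_card_le {n : ℕ} (hn : 2 ≤ n) {F : Finset ℕ}
    (hF : F ∈ gallaiComplex (friendshipGraph n)) : F.card ≤ 3 := by
  rw [mem_gallaiComplex_friendship hn] at hF
  rcases hF with ⟨a, b, -, -, -, -, -, hF⟩ | ⟨i, -, -, hF⟩
  · exact (Finset.card_le_card hF).trans Finset.card_le_three
  · exact (Finset.card_le_card hF).trans (Finset.card_le_two.trans (by norm_num))

lemma pair_mem_gallai {n : ℕ} (hn : 2 ≤ n) {x y : ℕ} (hx : 1 ≤ x) (hxy : x < y)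
    (hy : y ≤ 2 * n + 1) : ({x, y} : Finset ℕ) ∈ gallaiComplex (friendshipGraph n) := by
  rw [mem_gallaiComplex_friendship hn]
  by_cases hc : y = 2 * n + 1
  · subst hc
    refine Or.inl ⟨x, if x ≤ 2 then 3 else 1, by omega, by omega, by split_ifs <;> omega,
      by split_ifs <;> omega, by split_ifs <;> omega, ?_⟩
    intro z
    simp only [Finset.mem_insert, Finset.mem_singleton]
    tauto
  by_cases hp : (x + 1) / 2 = (y + 1) / 2
  · refine Or.inr ⟨(x + 1) / 2, by omega, by omega, ?_⟩
    intro z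
    simp only [Finset.mem_insert, Finset.mem_singleton]
    omega
  · refine Or.inl ⟨x, y, by omega, by omega, by omega, by omega, hp, ?_⟩
    intro z
    simp only [Finset.mem_insert, Finset.mem_singleton]
    tauto

lemma gallai_card_vertices {n : ℕ} (hn : 2 ≤ n) :
    {F ∈ gallaiComplex (friendshipGraph n) | F.card = 0 + 1}.ncard = 2 * n + 1 := by
  have : {F ∈ gallaiComplex (friendshipGraph n) | F.card = 0 + 1} =
      ((Finset.Icc 1 (2 * n + 1)).powersetCard 1 : Finset (Finset ℕ)) := by
    ext F
    simp only [Set.mem_ofPred_eq, Finset.mem_coe, Finset.mem_powersetCard]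
    constructor
    · exact fun h => ⟨gallai_face_subset hn h.1, h.2⟩
    · rintro ⟨h, hc⟩
      refine ⟨?_, hc⟩
      obtain ⟨x, rfl⟩ := Finset.card_eq_one.1 hc
      have hx : 1 ≤ x ∧ x ≤ 2 * n + 1 := by simpa using h
      -- A vertex is a face because it lies in some pair.
      have down : ∀ A B : Finset ℕ, A ⊆ B → B ∈ gallaiComplex (friendshipGraph n) →
          A ∈ gallaiComplex (friendshipGraph n) :=
        fun A B hAB ⟨C, hC, hBC⟩ => ⟨C, hC, hAB.trans hBC⟩
      rcases Nat.lt_or_ge x 2 with h2 | h2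
      · exact down _ _ (by simp) (pair_mem_gallai hn hx.1 (show x < 2 by omega) (by omega))
      · exact down _ _ (by simp) (pair_mem_gallai hn le_rfl (show 1 < x by omega) hx.2)
  rw [this, Set.ncard_coe_finset, Finset.card_powersetCard, Nat.card_Icc, Nat.choose_one_right]
  rfl

lemma gallai_card_edges {n : ℕ} (hn : 2 ≤ n) :
    {F ∈ gallaiComplex (friendshipGraph n) | F.card = 1 + 1}.ncard = (2 * n + 1).choose 2 := by
  have : {F ∈ gallaiComplex (friendshipGraph n) | F.card = 1 + 1} =
      ((Finset.Icc 1 (2 * n + 1)).powersetCard 2 : Finset (Finset ℕ)) := by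
    ext F
    simp only [Set.mem_ofPred_eq, Finset.mem_coe, Finset.mem_powersetCard]
    constructor
    · exact fun h => ⟨gallai_face_subset hn h.1, h.2⟩
    · rintro ⟨h, hc⟩
      refine ⟨?_, hc⟩
      obtain ⟨x, y, hxy, rfl⟩ := Finset.card_eq_two.1 hc
      simp only [Finset.insert_subset_iff, Finset.singleton_subset_iff, Finset.mem_Icc] at h
      rcases lt_or_gt_of_ne hxy with hl | hl
      · exact pair_mem_gallai hn (by omega) hl (by omega)
      · rw [Finset.pair_comm]
        exact pair_mem_gallai hn (by omega) hl (by omega)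
  rw [this, Set.ncard_coe_finset, Finset.card_powersetCard, Nat.card_Icc, Nat.add_sub_cancel]

/-- The triangles of the complex are counted through their outer edges: removing the centre
identifies them with the pairs of outer vertices other than the `n` pairs `{2i-1, 2i}`. -/
lemma gallai_card_triangles {n : ℕ} (hn : 2 ≤ n) :
    {F ∈ gallaiComplex (friendshipGraph n) | F.card = 2 + 1}.ncard + n = (2 * n).choose 2 := by
  set P := (Finset.Icc 1 (2 * n)).powersetCard 2 with hP
  set M := (Finset.Icc 1 n).image (fun i => ({2 * i - 1, 2 * i} : Finset ℕ)) with hM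
  have hMP : M ⊆ P := by
    intro A hA
    obtain ⟨i, hi, rfl⟩ := Finset.mem_image.1 hA
    rw [Finset.mem_Icc] at hi
    rw [hP, Finset.mem_powersetCard]
    refine ⟨?_, Finset.card_pair (by omega)⟩
    simp only [Finset.insert_subset_iff, Finset.singleton_subset_iff, Finset.mem_Icc]
    omega
  have hMc : M.card = n := by
    rw [hM, Finset.card_image_of_injOn, Nat.card_Icc, Nat.add_sub_cancel]
    intro i hi j hj h
    simp only [Finset.coe_Icc, Set.mem_Icc] at hi hj
    have h1 : 2 * i ∈ ({2 * j - 1, 2 * j} : Finset ℕ) := by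
      have h' : ({2 * i - 1, 2 * i} : Finset ℕ) = {2 * j - 1, 2 * j} := h
      rw [← h']; simp
    simp only [Finset.mem_insert, Finset.mem_singleton] at h1
    omega
  have hPc : P.card = (2 * n).choose 2 := by
    rw [hP, Finset.card_powersetCard, Nat.card_Icc, Nat.add_sub_cancel]
  have hc : ∀ A ∈ P, 2 * n + 1 ∉ A := by
    intro A hA h
    have := (Finset.mem_powersetCard.1 hA).1 h
    rw [Finset.mem_Icc] at this
    omega
  have : {F ∈ gallaiComplex (friendshipGraph n) | F.card = 2 + 1} =
      ((P \ M).image (insert (2 * n + 1)) : Finset (Finset ℕ)) := by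
    ext F
    simp only [Set.mem_ofPred_eq, Finset.mem_coe, Finset.mem_image, Finset.mem_sdiff]
    rw [mem_gallaiComplex_friendship hn]
    constructor
    · rintro ⟨⟨a, b, h1, h2, h3, h4, h5, hF⟩ | ⟨i, h1, h2, hF⟩, hcard⟩
      · have hF' : F = {a, b, 2 * n + 1} :=
          Finset.eq_of_subset_of_card_le hF (hcard ▸ Finset.card_le_three)
        refine ⟨{a, b}, ⟨?_, ?_⟩, ?_⟩
        · rw [hP, Finset.mem_powersetCard]
          refine ⟨?_, Finset.card_pair (by rintro rfl; exact h5 rfl)⟩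
          simp only [Finset.insert_subset_iff, Finset.singleton_subset_iff, Finset.mem_Icc]
          omega
        · intro hm
          obtain ⟨i, hi, h⟩ := Finset.mem_image.1 hm
          have h' : ({2 * i - 1, 2 * i} : Finset ℕ) = {a, b} := h
          have ha : a ∈ ({2 * i - 1, 2 * i} : Finset ℕ) := by rw [h']; simp
          have hb : b ∈ ({2 * i - 1, 2 * i} : Finset ℕ) := by rw [h']; simp
          simp only [Finset.mem_insert, Finset.mem_singleton, Finset.mem_Icc] at ha hb hi
          omega
        · rw [hF']
          ext z
          simp only [Finset.mem_insert, Finset.mem_singleton]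
          tauto
      · have := (Finset.card_le_card hF).trans Finset.card_le_two
        omega
    · rintro ⟨A, ⟨hA, hAM⟩, rfl⟩
      have hA' := hA
      rw [hP, Finset.mem_powersetCard] at hA'
      refine ⟨Or.inl ?_, by rw [Finset.card_insert_of_notMem (hc A hA), hA'.2]⟩
      obtain ⟨a, b, hab, rfl⟩ := Finset.card_eq_two.1 hA'.2
      have hI := hA'.1
      simp only [Finset.insert_subset_iff, Finset.singleton_subset_iff, Finset.mem_Icc] at hI
      refine ⟨a, b, by omega, by omega, by omega, by omega, ?_, ?_⟩
      · intro h
        refine hAM (Finset.mem_image.2 ⟨(a + 1) / 2, Finset.mem_Icc.2 (by omega), ?_⟩)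
        ext z
        simp only [Finset.mem_insert, Finset.mem_singleton]
        omega
      · intro z
        simp only [Finset.mem_insert, Finset.mem_singleton]
        tauto
  rw [this, Set.ncard_coe_finset, Finset.card_image_of_injOn, Finset.card_sdiff_of_subset hMP,
    hMc, hPc]
  · have := Finset.card_le_card hMP
    omega
  · intro A hA B hB h
    have hA := hc A (Finset.mem_sdiff.1 hA).1
    have hB := hc B (Finset.mem_sdiff.1 hB).1
    rw [← Finset.erase_insert hA, ← Finset.erase_insert hB, show insert _ A = insert _ B from h]

/-- For `n ≥ 2`, `χ(Δ_Γ(F_n)) = 1 - n`. -/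
theorem stmt11 (n : ℕ) (hn : 2 ≤ n) :
    eulerChar (gallaiComplex (friendshipGraph n)) = 1 - (n : ℤ) := by
  unfold eulerChar
  rw [finsum_eq_sum_of_support_subset (s := Finset.range 3)]
  · rw [Finset.sum_range_succ, Finset.sum_range_succ, Finset.sum_range_one,
      gallai_card_vertices hn, gallai_card_edges hn]
    have h3 := gallai_card_triangles hn
    have hs : (2 * n + 1).choose 2 = 2 * n + (2 * n).choose 2 := by
      rw [Nat.choose_succ_succ' (2 * n) 1, Nat.choose_one_right]
    rw [hs]
    generalize {F ∈ gallaiComplex (friendshipGraph n) | F.card = 2 + 1}.ncard = t at h3 ⊢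
    push_cast
    omega
  · intro k hk
    by_contra hk3
    have hk3 : 3 ≤ k := by simpa using hk3
    refine hk ?_
    have : {F ∈ gallaiComplex (friendshipGraph n) | F.card = k + 1} = ∅ := by
      ext F
      simp only [Set.mem_ofPred_eq, Set.mem_empty_iff_false, iff_false, not_and]
      intro hF h
      have := gallai_face_card_le hn hF
      omega
    simp [this]
end

section
/- For every n ≥ 2, the Euler characteristic of the line simplicial complex of the friendship graph F_n is χ(Δ_L(F_n)) = 1. -/
/-!
Every vertex of `F_n` other than the centre `c = 2n+1` has exactly one neighbour besides `c`, so
two distinct incident edges always involve `c`, and conversely any two outer vertices together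
with `c` form a path. No edge is isolated. Hence the faces of the line complex are exactly the
sets of vertices with at most two elements other than `c` (`mem_lineComplex_iff_card`). Counting
them by size gives `2n+1` points, `C(2n+1, 2)` edges and `C(2n, 2)` triangles, the triangles
being `c` together with a pair of outer vertices, and
`(2n+1) - C(2n+1, 2) + C(2n, 2) = 1` by Pascal's rule.
-/

open Finset

lemma friendship_adj_centre {n a : ℕ} (h1 : 1 ≤ a) (h2 : a ≤ 2 * n) :
    (friendshipGraph n).Adj a (2 * n + 1) := by
  rw [friendshipGraph, SimpleGraph.fromRel_adj]
  exact ⟨by omega, Or.inl (Or.inr ⟨h1, h2, rfl⟩)⟩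

/-- Adjacency in `F_n`, with the rim edges described by parity so that `omega` can use it. -/
lemma friendship_adj_cases {n a b : ℕ} (h : (friendshipGraph n).Adj a b) :
    (1 ≤ a ∧ a ≤ 2 * n ∧ b = 2 * n + 1) ∨ (1 ≤ b ∧ b ≤ 2 * n ∧ a = 2 * n + 1) ∨
    (1 ≤ a ∧ a < 2 * n ∧ a % 2 = 1 ∧ b = a + 1) ∨
    (1 ≤ b ∧ b < 2 * n ∧ b % 2 = 1 ∧ a = b + 1) := by
  rw [friendshipGraph, SimpleGraph.fromRel_adj] at h
  obtain ⟨_, (⟨i, hi⟩ | h) | (⟨i, hi⟩ | h)⟩ := h <;> omega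

/-- The generators of the line complex of `F_n` are the triples formed by the centre and two
distinct outer vertices. -/
lemma mem_lineIndices_friendship {n : ℕ} (hn : 1 ≤ n) (F : Finset ℕ) :
    F ∈ lineIndices (friendshipGraph n) ↔
      ∃ P ⊆ Icc 1 (2 * n), #P = 2 ∧ F = insert (2 * n + 1) P := by
  constructor
  · rintro (⟨i, j, k, hij, hjk, hik, rfl⟩ | ⟨i, j, hij, hi, hj, rfl⟩)
    · have key : ∀ a b, a ≠ b → 1 ≤ a → a ≤ 2 * n → 1 ≤ b → b ≤ 2 * n →
          ({i, j, k} : Finset ℕ) = {2 * n + 1, a, b} →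
          ∃ P ⊆ Icc 1 (2 * n), #P = 2 ∧ ({i, j, k} : Finset ℕ) = insert (2 * n + 1) P := by
        intro a b hab ha ha' hb hb' h
        refine ⟨{a, b}, ?_, card_pair hab, h⟩
        intro x hx
        simp only [mem_insert, mem_singleton] at hx
        rw [mem_Icc]
        omega
      have h1 := friendship_adj_cases hij
      have h2 := friendship_adj_cases hjk
      -- One of the three vertices is the centre; the other two are outer.
      by_cases hic : i = 2 * n + 1
      · exact key j k hjk.ne (by omega) (by omega) (by omega) (by omega) (by rw [hic])
      by_cases hjc : j = 2 * n + 1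
      · exact key i k hik (by omega) (by omega) (by omega) (by omega)
          (by rw [hjc, Finset.insert_comm])
      have hkc : k = 2 * n + 1 := by omega
      exact key i j hij.ne (by omega) (by omega) (by omega) (by omega)
        (by rw [hkc]; ext x; simp only [mem_insert, mem_singleton]; tauto)
    · -- An isolated edge would make the centre adjacent to a single vertex, but it is
      -- adjacent to both `1` and `2`.
      exfalso
      have h1 := friendship_adj_centre (n := n) (a := 1) le_rfl (by omega)
      have h2 := friendship_adj_centre (n := n) (a := 2) (by omega) (by omega)
      by_cases hic : i = 2 * n + 1
      · subst hic
        have := hi 1 h1.symm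
        have := hi 2 h2.symm
        omega
      by_cases hjc : j = 2 * n + 1
      · subst hjc
        have := hj 1 h1.symm
        have := hj 2 h2.symm
        omega
      have h3 := friendship_adj_cases hij
      have := hi _ (friendship_adj_centre (by omega) (by omega))
      omega
  · rintro ⟨P, hP, hcard, rfl⟩
    obtain ⟨a, b, hab, rfl⟩ := card_eq_two.mp hcard
    have ha := mem_Icc.mp (hP (mem_insert_self a {b}))
    have hb := mem_Icc.mp (hP (mem_insert_of_mem (mem_singleton_self b)))
    exact Or.inl ⟨a, 2 * n + 1, b, friendship_adj_centre ha.1 ha.2,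
      (friendship_adj_centre hb.1 hb.2).symm, hab, Finset.insert_comm _ _ _⟩

lemma mem_lineComplex_iff_card {n : ℕ} (hn : 1 ≤ n) (F : Finset ℕ) :
    F ∈ lineComplex (friendshipGraph n) ↔
      F.erase (2 * n + 1) ⊆ Icc 1 (2 * n) ∧ #(F.erase (2 * n + 1)) ≤ 2 := by
  constructor
  · rintro ⟨A, hA, hFA⟩
    obtain ⟨P, hP, hcard, rfl⟩ := (mem_lineIndices_friendship hn A).mp hA
    have h := subset_insert_iff.mp hFA
    exact ⟨h.trans hP, (card_le_card h).trans_eq hcard⟩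
  · rintro ⟨h1, h2⟩
    obtain ⟨P, hFP, hP, hcard⟩ := exists_subsuperset_card_eq h1 h2
      (by rw [Nat.card_Icc]; omega)
    exact ⟨_, (mem_lineIndices_friendship hn _).mpr ⟨P, hP, hcard, rfl⟩,
      subset_insert_iff.mpr hFP⟩

lemma erase_subset_outer_iff (n : ℕ) (F : Finset ℕ) :
    F.erase (2 * n + 1) ⊆ Icc 1 (2 * n) ↔ F ⊆ Icc 1 (2 * n + 1) := by
  rw [← subset_insert_iff,
    show insert (2 * n + 1) (Icc 1 (2 * n)) = Icc 1 (2 * n + 1) by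
      ext x; simp only [mem_insert, mem_Icc]; omega]

lemma ncard_faces_of_le_two {n m : ℕ} (hn : 1 ≤ n) (hm : m ≤ 2) :
    {F ∈ lineComplex (friendshipGraph n) | F.card = m}.ncard = (2 * n + 1).choose m := by
  have : {F ∈ lineComplex (friendshipGraph n) | F.card = m} =
      ((Icc 1 (2 * n + 1)).powersetCard m : Set (Finset ℕ)) := by
    ext F
    rw [Set.mem_ofPred_eq, mem_lineComplex_iff_card hn, erase_subset_outer_iff, mem_coe,
      mem_powersetCard]
    have := card_erase_le (s := F) (a := 2 * n + 1)
    constructor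
    · exact fun h => ⟨h.1.1, h.2⟩
    · exact fun h => ⟨⟨h.1, by omega⟩, h.2⟩
  rw [this, Set.ncard_coe_finset, card_powersetCard, Nat.card_Icc]
  rfl

/-- A face with three vertices contains the centre, and is determined by its two outer
vertices. -/
lemma ncard_faces_three {n : ℕ} (hn : 1 ≤ n) :
    {F ∈ lineComplex (friendshipGraph n) | F.card = 3}.ncard = (2 * n).choose 2 := by
  have hc : ∀ P ∈ (Icc 1 (2 * n)).powersetCard 2, 2 * n + 1 ∉ P := by
    intro P hP h
    have := mem_Icc.mp ((mem_powersetCard.mp hP).1 h)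
    omega
  have : {F ∈ lineComplex (friendshipGraph n) | F.card = 3} =
      (((Icc 1 (2 * n)).powersetCard 2).image (insert (2 * n + 1)) : Set (Finset ℕ)) := by
    ext F
    rw [Set.mem_ofPred_eq, mem_lineComplex_iff_card hn, mem_coe, mem_image]
    constructor
    · rintro ⟨⟨h1, h2⟩, h3⟩
      have hF : 2 * n + 1 ∈ F := by
        by_contra h
        rw [erase_eq_of_notMem h] at h2
        omega
      refine ⟨F.erase (2 * n + 1), mem_powersetCard.mpr ⟨h1, ?_⟩, insert_erase hF⟩
      rw [card_erase_of_mem hF, h3]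
    · rintro ⟨P, hP, rfl⟩
      have hP' := mem_powersetCard.mp hP
      rw [erase_insert (hc P hP), card_insert_of_notMem (hc P hP)]
      exact ⟨⟨hP'.1, hP'.2.le⟩, by rw [hP'.2]⟩
  rw [this, Set.ncard_coe_finset, card_image_of_injOn, card_powersetCard, Nat.card_Icc]
  · rfl
  · intro P hP Q hQ h
    rw [← erase_insert (hc P hP), ← erase_insert (hc Q hQ)]
    exact congrArg (fun s => s.erase (2 * n + 1)) h

lemma ncard_faces_of_four_le {n m : ℕ} (hn : 1 ≤ n) (hm : 4 ≤ m) :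
    {F ∈ lineComplex (friendshipGraph n) | F.card = m}.ncard = 0 := by
  have : {F ∈ lineComplex (friendshipGraph n) | F.card = m} = ∅ := by
    ext F
    rw [Set.mem_ofPred_eq, mem_lineComplex_iff_card hn]
    have := pred_card_le_card_erase (s := F) (a := 2 * n + 1)
    simp only [Set.mem_empty_iff_false, iff_false]
    omega
  rw [this, Set.ncard_empty]

/-- For `n ≥ 2`, `χ(Δ_L(F_n)) = 1`. -/
theorem stmt13 (n : ℕ) (hn : 2 ≤ n) :
    eulerChar (lineComplex (friendshipGraph n)) = 1 := by
  have hn' : 1 ≤ n := by omega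
  rw [eulerChar, finsum_eq_sum_of_support_subset (s := range 3)]
  · rw [sum_range_succ, sum_range_succ, sum_range_one, ncard_faces_of_le_two hn' (by omega),
      ncard_faces_of_le_two hn' (by omega), ncard_faces_three hn', Nat.choose_succ_succ' (2 * n) 1]
    simp only [zero_add, Nat.choose_one_right]
    push_cast
    ring
  · intro k hk
    rw [mem_coe, mem_range]
    by_contra h
    exact hk (by simp only [ncard_faces_of_four_le hn' (show 4 ≤ k + 1 by omega),
      Nat.cast_zero, mul_zero])
end
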